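/- Let N ≥ 2 and p > 1, and if N ≥ 3 assume additionally p + 1 < 2N/(N-2). Then there exist constants c₂ ≥ c₁ > 0 and α₀ > 0 such that for all α ≥ α₀: c₁ α^{1 + 2/(p+1)} ≤ S^rad_{α,p} ≤ c₂ α^{1 + 2/(p+1)}, where S^rad_{α,p} is the infimum of the Rayleigh quotient R_{α,p} over the radial members of 𝒞. In particular, every radial u ∈ 𝒞 satisfies R_{α,p}(u) ≥ c₁ α^{1 + 2/(p+1)} for α ≥ α₀. -/

import Mathlib

open MeasureTheory Metric Set Filter

noncomputable section

abbrev E (N : ℕ) := EuclideanSpace ℝ (Fin N)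

/-- The Laplacian: sum of pure second partial derivatives. -/
def lap {N : ℕ} (u : E N → ℝ) (x : E N) : ℝ :=
  ∑ i, fderiv ℝ (fun y => fderiv ℝ u y (EuclideanSpace.single i 1)) x (EuclideanSpace.single i 1)
/-- The admissible class 𝒞: C¹ functions on the closed unit ball, vanishing on the
boundary sphere, not identically zero. -/
def memC {N : ℕ} (u : E N → ℝ) : Prop :=
  ContDiffOn ℝ 1 u (closedBall 0 1) ∧
  (∀ x : E N, ‖x‖ = 1 → u x = 0) ∧
  ∃ x ∈ closedBall (0 : E N) 1, u x ≠ 0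

/-- The Rayleigh quotient R_{α,p}. -/
def ray {N : ℕ} (α p : ℝ) (u : E N → ℝ) : ℝ :=
  (∫ x in ball (0 : E N) 1, ‖gradient u x‖ ^ 2) /
    (∫ x in ball (0 : E N) 1, ‖x‖ ^ α * |u x| ^ (p + 1)) ^ (2 / (p + 1))

/-- The ground-state level S_{α,p}. -/
def Sval (N : ℕ) (α p : ℝ) : ℝ := sInf {c | ∃ u : E N → ℝ, memC u ∧ ray α p u = c}

/-- A function is radial if its value depends only on the norm. -/
def radial {N : ℕ} (u : E N → ℝ) : Prop := ∀ x y : E N, ‖x‖ = ‖y‖ → u x = u y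

/-- The radial ground-state level S^rad_{α,p}. -/
def SradVal (N : ℕ) (α p : ℝ) : ℝ :=
  sInf {c | ∃ u : E N → ℝ, memC u ∧ radial u ∧ ray α p u = c}

/-!
Write a radial `u` vanishing on the unit sphere as `u x = φ ‖x‖`, and let
`A = ∫₀¹ s^(N-1) φ'(s)² ds`, so that the Dirichlet energy of `u` is at least `|S^(N-1)| A`.
Cauchy–Schwarz on `[r, 1]` gives `r^(N-1) φ(r)² ≤ (1 - r) A`. Hence for `q = p + 1` and
`α ≥ (N - 1) q` the weighted integral of `|u|^q` is at most
`|S^(N-1)| A^(q/2) ∫₀¹ (1 - r)^(q/2) r^(α/2) dr`, and this Beta integral is of order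
`α^(-(q/2 + 1))`, which produces the growth `α^(1 + 2/q)`. The rate is attained by
`|x|^α (1 - |x|)`, whose energy is of order `1/α` and whose weighted integral is a Beta integral of
order `α^(-(q + 1))`.
-/

section Laplace

lemma intervalIntegrable_one_sub_rpow_mul_rpow {k γ : ℝ} (hk : -1 < k) (hγ : 0 ≤ γ) :
    IntervalIntegrable (fun r : ℝ => (1 - r) ^ k * r ^ γ) volume 0 1 := by
  have hsub : IntervalIntegrable (fun r : ℝ => (1 - r) ^ k) volume 0 1 := by
    simpa using ((intervalIntegral.intervalIntegrable_rpow' (a := 0) (b := 1) hk).comp_sub_left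
      1).symm
  exact hsub.mul_continuousOn (Real.continuous_rpow_const hγ).continuousOn

lemma integral_one_sub_rpow_mul_rpow_comm (k γ : ℝ) :
    ∫ r in (0 : ℝ)..1, (1 - r) ^ k * r ^ γ = ∫ s in (0 : ℝ)..1, s ^ k * (1 - s) ^ γ := by
  simpa using intervalIntegral.integral_comp_sub_left (a := 0) (b := 1)
    (fun s : ℝ => s ^ k * (1 - s) ^ γ) 1

lemma one_sub_rpow_le_exp_neg_mul {s γ : ℝ} (hs : s ≤ 1) (hγ : 0 ≤ γ) :
    (1 - s) ^ γ ≤ Real.exp (-(γ * s)) :=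
  calc (1 - s) ^ γ ≤ Real.exp (-s) ^ γ :=
        Real.rpow_le_rpow (by linarith) (Real.one_sub_le_exp_neg s) hγ
    _ = Real.exp (-(γ * s)) := by rw [← Real.exp_mul, neg_mul, mul_comm]

lemma integral_one_sub_rpow_mul_rpow_le {k γ : ℝ} (hk : -1 < k) (hγ : 0 < γ) :
    ∫ r in (0 : ℝ)..1, (1 - r) ^ k * r ^ γ ≤ γ ^ (-(k + 1)) * Real.Gamma (k + 1) := by
  have hGamma : ∫ s in Ioi (0 : ℝ), s ^ k * Real.exp (-(γ * s)) =
      γ ^ (-(k + 1)) * Real.Gamma (k + 1) := by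
    have h := Real.integral_rpow_mul_exp_neg_mul_Ioi (a := k + 1) (by linarith) hγ
    rwa [add_sub_cancel_right, one_div, Real.inv_rpow hγ.le, ← Real.rpow_neg hγ.le] at h
  have hint : IntegrableOn (fun s : ℝ => s ^ k * Real.exp (-(γ * s))) (Ioi 0) := by
    simpa using integrableOn_rpow_mul_exp_neg_mul_rpow hk one_pos hγ
  rw [integral_one_sub_rpow_mul_rpow_comm, ← hGamma,
    intervalIntegral.integral_of_le zero_le_one]
  calc ∫ s in Ioc (0 : ℝ) 1, s ^ k * (1 - s) ^ γ
      ≤ ∫ s in Ioc (0 : ℝ) 1, s ^ k * Real.exp (-(γ * s)) := by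
        refine integral_mono_of_nonneg ?_ (hint.mono_set Ioc_subset_Ioi_self) ?_
        all_goals filter_upwards [ae_restrict_mem measurableSet_Ioc] with s hs
        · exact mul_nonneg (Real.rpow_nonneg hs.1.le _)
            (Real.rpow_nonneg (sub_nonneg.2 hs.2) _)
        · exact mul_le_mul_of_nonneg_left (one_sub_rpow_le_exp_neg_mul hs.2 hγ.le)
            (Real.rpow_nonneg hs.1.le _)
    _ ≤ ∫ s in Ioi (0 : ℝ), s ^ k * Real.exp (-(γ * s)) := by
        refine setIntegral_mono_set hint ?_ Ioc_subset_Ioi_self.eventuallyLE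
        filter_upwards [ae_restrict_mem measurableSet_Ioi] with s hs
        exact mul_nonneg (Real.rpow_nonneg (le_of_lt hs) _) (Real.exp_pos _).le

lemma le_integral_one_sub_rpow_mul_rpow {k γ : ℝ} (hk : -1 < k) (hγ : 1 ≤ γ) :
    (2 * γ) ^ (-(k + 1)) / (2 * (k + 1)) ≤ ∫ r in (0 : ℝ)..1, (1 - r) ^ k * r ^ γ := by
  have hε : 0 < (2 * γ)⁻¹ := by positivity
  have hε1 : (2 * γ)⁻¹ ≤ 1 := inv_le_one_of_one_le₀ (by linarith)
  have hint : IntervalIntegrable (fun s : ℝ => s ^ k * (1 - s) ^ γ) volume 0 1 := by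
    simpa using ((intervalIntegrable_one_sub_rpow_mul_rpow hk (zero_le_one.trans hγ)).comp_sub_left
      1).symm
  -- Only the layer `s ≤ 1 / (2γ)` matters: there Bernoulli's inequality gives `(1 - s)^γ ≥ 1/2`.
  have hbernoulli : ∀ s ∈ Icc 0 (2 * γ)⁻¹, s ^ k * (1 / 2) ≤ s ^ k * (1 - s) ^ γ := by
    intro s ⟨hs0, hs⟩
    have h := one_add_mul_self_le_rpow_one_add (s := -s) (by linarith) hγ
    have hγs : s * (2 * γ) ≤ 1 := (le_inv_mul_iff₀' (by positivity)).1 (by simpa using hs)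
    refine mul_le_mul_of_nonneg_left ?_ (Real.rpow_nonneg hs0 _)
    rw [← sub_eq_add_neg] at h
    linarith
  rw [integral_one_sub_rpow_mul_rpow_comm]
  calc (2 * γ) ^ (-(k + 1)) / (2 * (k + 1))
      = ∫ s in (0 : ℝ)..(2 * γ)⁻¹, s ^ k * (1 / 2) := by
        rw [intervalIntegral.integral_mul_const, integral_rpow (Or.inl hk),
          Real.zero_rpow (by linarith), Real.inv_rpow (by positivity),
          Real.rpow_neg (by positivity)]
        field_simp
        ring
    _ ≤ ∫ s in (0 : ℝ)..(2 * γ)⁻¹, s ^ k * (1 - s) ^ γ :=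
        intervalIntegral.integral_mono_on hε.le
          ((intervalIntegral.intervalIntegrable_rpow' hk).mul_const _)
          (hint.mono_set (by rw [uIcc_of_le hε.le, uIcc_of_le zero_le_one]; gcongr))
          hbernoulli
    _ ≤ ∫ s in (0 : ℝ)..1, s ^ k * (1 - s) ^ γ := by
        refine intervalIntegral.integral_mono_interval le_rfl hε.le hε1 ?_ hint
        filter_upwards [ae_restrict_mem measurableSet_Ioc] with s hs
        exact mul_nonneg (Real.rpow_nonneg hs.1.le _) (Real.rpow_nonneg (sub_nonneg.2 hs.2) _)

end Laplace

section OneDimensional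

lemma sq_integral_le_measureReal_univ_mul_integral_sq {Ω : Type*} {m : MeasurableSpace Ω}
    {μ : Measure Ω} [IsFiniteMeasure μ] {f : Ω → ℝ} (hf : Integrable f μ)
    (hf_sq : Integrable (fun x => f x ^ 2) μ) :
    (∫ x, f x ∂μ) ^ 2 ≤ μ.real univ * ∫ x, f x ^ 2 ∂μ := by
  rcases eq_zero_or_neZero μ with rfl | _
  · simp
  have hμ : 0 < μ.real univ := measureReal_univ_pos
  have hJensen := (even_two.convexOn_pow (𝕜 := ℝ)).map_average_le (by fun_prop) isClosed_univ
    (by simp) hf hf_sq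
  rw [average_eq, average_eq, smul_eq_mul, smul_eq_mul] at hJensen
  field_simp at hJensen
  exact hJensen

lemma intervalIntegrable_mul_deriv_pow {a b : ℝ} {f w : ℝ → ℝ} (hab : a ≤ b)
    (hf : ContDiffOn ℝ 1 f (Icc a b)) (hw : ContinuousOn w (Icc a b)) (k : ℕ) :
    IntervalIntegrable (fun s => w s * deriv f s ^ k) volume a b := by
  rcases hab.eq_or_lt with rfl | hlt
  · simp
  have hcont : ContinuousOn (derivWithin f (Icc a b)) (Icc a b) :=
    hf.continuousOn_derivWithin (uniqueDiffOn_Icc hlt) le_rfl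
  refine ((hw.mul (hcont.pow k)).intervalIntegrable_of_Icc hab).congr_uIoo fun s hs => ?_
  rw [uIoo_of_le hab] at hs
  simp only [derivWithin_of_mem_nhds (Icc_mem_nhds hs.1 hs.2), Pi.mul_apply, Pi.pow_apply]

lemma sq_sub_le_mul_integral_deriv_sq {a b : ℝ} {f : ℝ → ℝ} (hab : a ≤ b)
    (hf : ContDiffOn ℝ 1 f (Icc a b)) :
    (f b - f a) ^ 2 ≤ (b - a) * ∫ s in a..b, deriv f s ^ 2 := by
  have hint (k : ℕ) : Integrable (fun s => deriv f s ^ k) (volume.restrict (Ioc a b)) := by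
    simpa [IntegrableOn] using
      (intervalIntegrable_mul_deriv_pow hab hf (w := 1) continuousOn_const k).1
  have h := sq_integral_le_measureReal_univ_mul_integral_sq (μ := volume.restrict (Ioc a b))
    (by simpa only [pow_one] using hint 1) (hint 2)
  rwa [← intervalIntegral.integral_of_le hab, ← intervalIntegral.integral_of_le hab,
    intervalIntegral.integral_deriv_of_contDiffOn_Icc hf hab, measureReal_restrict_apply_univ,
    Real.volume_real_Ioc_of_le hab] at h

/- The weight `s ^ n` is increasing, so it can be pulled out of `∫ s in r..R` at the left endpoint;
this is where the decay of a radial function of finite energy comes from. -/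
lemma pow_mul_sq_le_mul_integral_pow_mul_deriv_sq {R r : ℝ} {φ : ℝ → ℝ}
    (hφ : ContDiffOn ℝ 1 φ (Icc 0 R)) (hφR : φ R = 0) (hr : r ∈ Icc 0 R) (n : ℕ) :
    r ^ n * φ r ^ 2 ≤ (R - r) * ∫ s in (0 : ℝ)..R, s ^ n * deriv φ s ^ 2 := by
  have hφr : ContDiffOn ℝ 1 φ (Icc r R) := hφ.mono (Icc_subset_Icc_left hr.1)
  have hweight : r ^ n * ∫ s in r..R, deriv φ s ^ 2 ≤ ∫ s in r..R, s ^ n * deriv φ s ^ 2 := by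
    rw [← intervalIntegral.integral_const_mul]
    exact intervalIntegral.integral_mono_on hr.2
      (intervalIntegrable_mul_deriv_pow hr.2 hφr continuousOn_const 2)
      (intervalIntegrable_mul_deriv_pow hr.2 hφr (continuous_pow n).continuousOn 2)
      fun s hs => mul_le_mul_of_nonneg_right (pow_le_pow_left₀ hr.1 hs.1 n) (sq_nonneg _)
  have hinterval : ∫ s in r..R, s ^ n * deriv φ s ^ 2 ≤
      ∫ s in (0 : ℝ)..R, s ^ n * deriv φ s ^ 2 := by
    refine intervalIntegral.integral_mono_interval hr.1 hr.2 le_rfl ?_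
      (intervalIntegrable_mul_deriv_pow (hr.1.trans hr.2) hφ (continuous_pow n).continuousOn 2)
    filter_upwards [ae_restrict_mem measurableSet_Ioc] with s hs
    exact mul_nonneg (pow_nonneg hs.1.le n) (sq_nonneg _)
  calc r ^ n * φ r ^ 2
      ≤ r ^ n * ((R - r) * ∫ s in r..R, deriv φ s ^ 2) := by
        refine mul_le_mul_of_nonneg_left ?_ (pow_nonneg hr.1 n)
        simpa [hφR] using sq_sub_le_mul_integral_deriv_sq hr.2 hφr
    _ = (R - r) * (r ^ n * ∫ s in r..R, deriv φ s ^ 2) := by ring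
    _ ≤ (R - r) * ∫ s in (0 : ℝ)..R, s ^ n * deriv φ s ^ 2 :=
        mul_le_mul_of_nonneg_left (hweight.trans hinterval) (sub_nonneg.2 hr.2)

lemma pow_mul_rpow_mul_abs_rpow_le {n : ℕ} {q α A r y : ℝ} (hq : 0 < q) (hnq : n * q ≤ α)
    (hr : r ∈ Ioc 0 1) (hA : 0 ≤ A) (hy : r ^ n * y ^ 2 ≤ (1 - r) * A) :
    r ^ n * (r ^ α * |y| ^ q) ≤ A ^ (q / 2) * ((1 - r) ^ (q / 2) * r ^ (α / 2)) := by
  obtain ⟨hr0, hr1⟩ := hr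
  have hpow : r ^ (n * q / 2) * |y| ^ q = (r ^ n * y ^ 2) ^ (q / 2) := by
    rw [Real.mul_rpow (by positivity) (by positivity), ← sq_abs, ← Real.rpow_natCast_mul hr0.le,
      ← Real.rpow_natCast_mul (abs_nonneg y)]
    congr 2
    · ring
    · push_cast; ring
  have hsplit : r ^ α ≤ r ^ (α / 2) * r ^ (n * q / 2) := by
    rw [← Real.rpow_add hr0]
    exact Real.rpow_le_rpow_of_exponent_ge hr0 hr1 (by linarith)
  calc r ^ n * (r ^ α * |y| ^ q)
      ≤ 1 * (r ^ (α / 2) * r ^ (n * q / 2) * |y| ^ q) := by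
        gcongr
        exact pow_le_one₀ hr0.le hr1
    _ = r ^ (α / 2) * (r ^ n * y ^ 2) ^ (q / 2) := by rw [one_mul, mul_assoc, hpow]
    _ ≤ r ^ (α / 2) * ((1 - r) * A) ^ (q / 2) := by gcongr
    _ = A ^ (q / 2) * ((1 - r) ^ (q / 2) * r ^ (α / 2)) := by
        rw [Real.mul_rpow (sub_nonneg.2 hr1) hA]
        ring

lemma integral_pow_mul_rpow_mul_abs_rpow_le {n : ℕ} {q α : ℝ} {φ : ℝ → ℝ} (hq : 0 < q)
    (hα : 0 < α) (hnq : n * q ≤ α) (hφ : ContDiffOn ℝ 1 φ (Icc 0 1)) (hφ1 : φ 1 = 0) :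
    ∫ r in (0 : ℝ)..1, r ^ n * (r ^ α * |φ r| ^ q) ≤
      (∫ s in (0 : ℝ)..1, s ^ n * deriv φ s ^ 2) ^ (q / 2) *
        ((α / 2) ^ (-(q / 2 + 1)) * Real.Gamma (q / 2 + 1)) := by
  set A := ∫ s in (0 : ℝ)..1, s ^ n * deriv φ s ^ 2
  have hA : 0 ≤ A := intervalIntegral.integral_nonneg zero_le_one fun s hs =>
    mul_nonneg (pow_nonneg hs.1 n) (sq_nonneg _)
  have hcont : ContinuousOn (fun r : ℝ => r ^ n * (r ^ α * |φ r| ^ q)) (Icc 0 1) :=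
    (continuous_pow n).continuousOn.mul ((Real.continuous_rpow_const hα.le).continuousOn.mul
      (hφ.continuousOn.abs.rpow_const fun _ _ => Or.inr hq.le))
  calc ∫ r in (0 : ℝ)..1, r ^ n * (r ^ α * |φ r| ^ q)
      ≤ ∫ r in (0 : ℝ)..1, A ^ (q / 2) * ((1 - r) ^ (q / 2) * r ^ (α / 2)) :=
        intervalIntegral.integral_mono_on_of_le_Ioo zero_le_one
          (hcont.intervalIntegrable_of_Icc zero_le_one)
          ((intervalIntegrable_one_sub_rpow_mul_rpow (by linarith) (by linarith)).const_mul _)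
          fun r hr => pow_mul_rpow_mul_abs_rpow_le hq hnq (Ioo_subset_Ioc_self hr) hA
            (pow_mul_sq_le_mul_integral_pow_mul_deriv_sq hφ hφ1 (Ioo_subset_Icc_self hr) n)
    _ = A ^ (q / 2) * ∫ r in (0 : ℝ)..1, (1 - r) ^ (q / 2) * r ^ (α / 2) :=
        intervalIntegral.integral_const_mul _ _
    _ ≤ A ^ (q / 2) * ((α / 2) ^ (-(q / 2 + 1)) * Real.Gamma (q / 2 + 1)) := by
        gcongr
        exact integral_one_sub_rpow_mul_rpow_le (by linarith) (by linarith)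

end OneDimensional

section Radial

lemma setIntegral_ball_fun_norm {V F : Type*} [NormedAddCommGroup V] [NormedSpace ℝ V]
    [FiniteDimensional ℝ V] [Nontrivial V] [MeasurableSpace V] [BorelSpace V] (μ : Measure V)
    [μ.IsAddHaarMeasure] [NormedAddCommGroup F] [NormedSpace ℝ F] (f : ℝ → F) {R : ℝ}
    (hR : 0 ≤ R) :
    ∫ x in ball (0 : V) R, f ‖x‖ ∂μ = (Module.finrank ℝ V * μ.real (ball 0 1)) •
      ∫ r in (0 : ℝ)..R, r ^ (Module.finrank ℝ V - 1) • f r := by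
  have hball (x : V) : (Iio R).indicator f ‖x‖ = (ball 0 R).indicator (fun x => f ‖x‖) x := by
    simp [indicator]
  have hsmul (r : ℝ) : r ^ (Module.finrank ℝ V - 1) • (Iio R).indicator f r =
      (Iio R).indicator (fun r => r ^ (Module.finrank ℝ V - 1) • f r) r :=
    (indicator_smul_apply (Iio R) (fun r => r ^ (Module.finrank ℝ V - 1)) f r).symm
  have h := integral_fun_norm_addHaar μ ((Iio R).indicator f)
  simp_rw [hball, hsmul] at h
  rw [integral_indicator measurableSet_ball, setIntegral_indicator measurableSet_Iio,
    Ioi_inter_Iio, ← integral_Ioc_eq_integral_Ioo, ← intervalIntegral.integral_of_le hR,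
    ← Nat.cast_smul_eq_nsmul ℝ, smul_smul] at h
  exact h

lemma norm_gradient {V : Type*} [NormedAddCommGroup V] [InnerProductSpace ℝ V] [CompleteSpace V]
    (u : V → ℝ) (x : V) : ‖gradient u x‖ = ‖fderiv ℝ u x‖ := by
  rw [← toDual_gradient, LinearIsometryEquiv.norm_map]

lemma integrableOn_norm_gradient_sq {V : Type*} [NormedAddCommGroup V] [InnerProductSpace ℝ V]
    [FiniteDimensional ℝ V] [MeasurableSpace V] [BorelSpace V] {μ : Measure V}
    [IsFiniteMeasureOnCompacts μ] {u : V → ℝ} {c : V} {R : ℝ}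
    (hu : ContDiffOn ℝ 1 u (closedBall c R)) :
    IntegrableOn (fun x => ‖gradient u x‖ ^ 2) (ball c R) μ := by
  rcases le_or_gt R 0 with hR | hR
  · simp [ball_eq_empty.2 hR]
  have hunique : UniqueDiffOn ℝ (closedBall c R) :=
    uniqueDiffOn_convex (convex_closedBall c R)
      ((nonempty_ball.2 hR).mono ball_subset_interior_closedBall)
  have hcont := (hu.continuousOn_fderivWithin hunique le_rfl).norm.pow 2
  refine ((hcont.integrableOn_compact (isCompact_closedBall c R)).mono_set
    ball_subset_closedBall).congr_fun (fun x hx => ?_) measurableSet_ball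
  simp only [norm_gradient, Pi.pow_apply,
    fderivWithin_of_mem_nhds (closedBall_mem_nhds_of_mem hx)]

/-- The surface area of the unit sphere of `E N`, the constant of integration in polar
coordinates; it is encoded as `N` times the volume of the unit ball. -/
def sphereArea (N : ℕ) : ℝ := N * volume.real (ball (0 : E N) 1)

/-- The profile `φ` of a radial function `u`, so that `u x = φ ‖x‖`; it is read off along the first
coordinate axis. -/
def profile {N : ℕ} [NeZero N] (u : E N → ℝ) (t : ℝ) : ℝ := u (t • EuclideanSpace.single 0 1)

variable {N : ℕ} [NeZero N] {u : E N → ℝ}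

lemma sphereArea_pos : 0 < sphereArea N :=
  mul_pos (Nat.cast_pos.2 (NeZero.pos N))
    (ENNReal.toReal_pos (measure_ball_pos volume _ one_pos).ne' measure_ball_lt_top.ne)

lemma setIntegral_unitBall_fun_norm (f : ℝ → ℝ) :
    ∫ x in ball (0 : E N) 1, f ‖x‖ = sphereArea N * ∫ r in (0 : ℝ)..1, r ^ (N - 1) * f r := by
  simpa [sphereArea] using setIntegral_ball_fun_norm (volume : Measure (E N)) f zero_le_one

lemma radial.apply_eq_profile_norm (hu : radial u) (x : E N) : u x = profile u ‖x‖ :=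
  hu _ _ (by simp [norm_smul])

lemma radial.profile_eq (hu : radial u) {θ : E N} (hθ : ‖θ‖ = 1) :
    profile u = fun t => u (t • θ) :=
  funext fun t => hu _ _ (by simp [norm_smul, hθ])

lemma memC.profile_one (hu : memC u) : profile u 1 = 0 := hu.2.1 _ (by simp)

lemma contDiffOn_profile {R : ℝ} (hu : ContDiffOn ℝ 1 u (closedBall 0 R)) :
    ContDiffOn ℝ 1 (profile u) (Icc 0 R) :=
  hu.comp (by fun_prop) fun t ht => by simpa [norm_smul, abs_of_nonneg ht.1] using ht.2

lemma radial.abs_deriv_profile_norm_le (hu : radial u) {x : E N} (hx : DifferentiableAt ℝ u x) :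
    |deriv (profile u) ‖x‖| ≤ ‖gradient u x‖ := by
  obtain ⟨θ, hθ, hxθ⟩ : ∃ θ : E N, ‖θ‖ = 1 ∧ ‖x‖ • θ = x := by
    rcases eq_or_ne x 0 with rfl | h0
    · exact ⟨EuclideanSpace.single 0 1, by simp, by simp⟩
    · exact ⟨‖x‖⁻¹ • x, norm_smul_inv_norm (𝕜 := ℝ) h0, smul_inv_smul₀ (norm_ne_zero_iff.2 h0) x⟩
  have hline : HasDerivAt (fun t : ℝ => t • θ) θ ‖x‖ := by
    simpa using (hasDerivAt_id ‖x‖).smul_const θ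
  have hderiv : HasDerivAt (profile u) (fderiv ℝ u x θ) ‖x‖ := by
    rw [hu.profile_eq hθ]
    exact (show HasFDerivAt u (fderiv ℝ u x) (‖x‖ • θ) by
      rw [hxθ]; exact hx.hasFDerivAt).comp_hasDerivAt _ hline
  rw [hderiv.deriv, norm_gradient]
  simpa [hθ] using (fderiv ℝ u x).le_opNorm θ

lemma radial.sphereArea_mul_integral_deriv_profile_sq_le (hu : radial u)
    (hC : ContDiffOn ℝ 1 u (closedBall 0 1)) :
    sphereArea N * ∫ r in (0 : ℝ)..1, r ^ (N - 1) * deriv (profile u) r ^ 2 ≤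
      ∫ x in ball (0 : E N) 1, ‖gradient u x‖ ^ 2 := by
  rw [← setIntegral_unitBall_fun_norm fun r => deriv (profile u) r ^ 2]
  refine integral_mono_of_nonneg (Eventually.of_forall fun x => sq_nonneg _)
    (integrableOn_norm_gradient_sq hC) ?_
  filter_upwards [ae_restrict_mem measurableSet_ball] with x hx
  have hdiff : DifferentiableAt ℝ u x :=
    (hC.differentiableOn one_ne_zero).differentiableAt (closedBall_mem_nhds_of_mem hx)
  rw [← sq_abs]
  exact pow_le_pow_left₀ (abs_nonneg _) (hu.abs_deriv_profile_norm_le hdiff) 2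

lemma radial.setIntegral_norm_rpow_mul_abs_rpow (hu : radial u) (α q : ℝ) :
    ∫ x in ball (0 : E N) 1, ‖x‖ ^ α * |u x| ^ q =
      sphereArea N * ∫ r in (0 : ℝ)..1, r ^ (N - 1) * (r ^ α * |profile u r| ^ q) := by
  simp_rw [hu.apply_eq_profile_norm]
  exact setIntegral_unitBall_fun_norm fun r => r ^ α * |profile u r| ^ q

lemma memC.setIntegral_norm_rpow_mul_abs_rpow_pos (hu : memC u) {α q : ℝ} (hα : 0 ≤ α)
    (hq : 0 ≤ q) : 0 < ∫ x in ball (0 : E N) 1, ‖x‖ ^ α * |u x| ^ q := by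
  obtain ⟨hC, hsphere, x, hx, hux⟩ := hu
  have hcont : ContinuousOn (fun x => ‖x‖ ^ α * |u x| ^ q) (closedBall (0 : E N) 1) :=
    (continuous_norm.rpow_const fun _ => Or.inr hα).continuousOn.mul
      (hC.continuousOn.abs.rpow_const fun _ _ => Or.inr hq)
  have hint : IntegrableOn (fun x => ‖x‖ ^ α * |u x| ^ q) (ball (0 : E N) 1) :=
    (hcont.integrableOn_compact (isCompact_closedBall _ _)).mono_set ball_subset_closedBall
  rw [setIntegral_pos_iff_support_of_nonneg_ae
    (Eventually.of_forall fun x => by simp only [Pi.zero_apply]; positivity) hint]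
  have hx_ball : x ∈ ball (0 : E N) 1 := by
    rw [mem_closedBall_zero_iff] at hx
    rw [mem_ball_zero_iff]
    exact hx.lt_of_ne fun h => hux (hsphere x h)
  have hopen : IsOpen (ball (0 : E N) 1 ∩ u ⁻¹' {0}ᶜ) :=
    (hC.continuousOn.mono ball_subset_closedBall).isOpen_inter_preimage isOpen_ball
      isOpen_compl_singleton
  have hpos : 0 < volume (ball (0 : E N) 1 ∩ u ⁻¹' {0}ᶜ ∩ {0}ᶜ) :=
    (hopen.inter isOpen_compl_singleton).measure_pos volume
      ((dense_compl_singleton (0 : E N)).inter_open_nonempty _ hopen ⟨x, hx_ball, hux⟩)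
  refine hpos.trans_le (measure_mono ?_)
  rintro y ⟨⟨hy_ball, hy⟩, hy0⟩
  exact ⟨(mul_pos (Real.rpow_pos_of_pos (norm_pos_iff.2 hy0) α)
    (Real.rpow_pos_of_pos (abs_pos.2 hy) q)).ne', hy_ball⟩

end Radial

section LowerBound

lemma le_div_rpow_of_le_mul_rpow {C D I q α : ℝ} (hC : 0 < C) (hD : 0 ≤ D) (hI : 0 < I)
    (hq : 0 < q) (hα : 0 < α) (h : I ≤ C * α ^ (-(q / 2 + 1)) * D ^ (q / 2)) :
    C ^ (-(2 / q)) * α ^ (1 + 2 / q) ≤ D / I ^ (2 / q) := by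
  have hroot : I ^ (2 / q) ≤ C ^ (2 / q) * α ^ (-(1 + 2 / q)) * D :=
    calc I ^ (2 / q) ≤ (C * α ^ (-(q / 2 + 1)) * D ^ (q / 2)) ^ (2 / q) := by gcongr
      _ = C ^ (2 / q) * α ^ (-(q / 2 + 1) * (2 / q)) * D ^ (q / 2 * (2 / q)) := by
          rw [Real.mul_rpow (by positivity) (by positivity),
            Real.mul_rpow (by positivity) (by positivity), Real.rpow_mul hα.le, Real.rpow_mul hD]
      _ = C ^ (2 / q) * α ^ (-(1 + 2 / q)) * D := by
          rw [show -(q / 2 + 1) * (2 / q) = -(1 + 2 / q) by field_simp,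
            show q / 2 * (2 / q) = 1 by field_simp, Real.rpow_one]
  rw [le_div_iff₀ (Real.rpow_pos_of_pos hI _)]
  calc C ^ (-(2 / q)) * α ^ (1 + 2 / q) * I ^ (2 / q)
      ≤ C ^ (-(2 / q)) * α ^ (1 + 2 / q) * (C ^ (2 / q) * α ^ (-(1 + 2 / q)) * D) := by gcongr
    _ = D := by
        rw [Real.rpow_neg hC.le, Real.rpow_neg hα.le]
        field_simp

variable {N : ℕ} [NeZero N]

lemma exists_forall_radial_mul_rpow_le_ray {p : ℝ} (hp : -1 < p) :
    ∃ c > 0, ∀ α > 0, ((N - 1 : ℕ) : ℝ) * (p + 1) ≤ α →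
      ∀ u : E N → ℝ, memC u → radial u → c * α ^ (1 + 2 / (p + 1)) ≤ ray α p u := by
  have hq : 0 < p + 1 := by linarith
  have hω := sphereArea_pos (N := N)
  set C := sphereArea N * (2 ^ ((p + 1) / 2 + 1) * Real.Gamma ((p + 1) / 2 + 1)) with hC
  refine ⟨sphereArea N * C ^ (-(2 / (p + 1))), by positivity, fun α hα hnα u hu hrad => ?_⟩
  set A := ∫ s in (0 : ℝ)..1, s ^ (N - 1) * deriv (profile u) s ^ 2
  set I := ∫ x in ball (0 : E N) 1, ‖x‖ ^ α * |u x| ^ (p + 1) with hI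
  have hA : 0 ≤ A := intervalIntegral.integral_nonneg zero_le_one fun s hs =>
    mul_nonneg (pow_nonneg hs.1 _) (sq_nonneg _)
  have hI_pos : 0 < I := hu.setIntegral_norm_rpow_mul_abs_rpow_pos hα.le hq.le
  have hI_le : I ≤ C * α ^ (-((p + 1) / 2 + 1)) * A ^ ((p + 1) / 2) := by
    have h := integral_pow_mul_rpow_mul_abs_rpow_le hq hα hnα (contDiffOn_profile hu.1)
      hu.profile_one
    rw [Real.div_rpow hα.le zero_le_two, Real.rpow_neg zero_le_two, div_inv_eq_mul] at h
    rw [hI, hrad.setIntegral_norm_rpow_mul_abs_rpow, hC]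
    exact (mul_le_mul_of_nonneg_left h hω.le).trans_eq (by ring)
  calc sphereArea N * C ^ (-(2 / (p + 1))) * α ^ (1 + 2 / (p + 1))
      = sphereArea N * (C ^ (-(2 / (p + 1))) * α ^ (1 + 2 / (p + 1))) := mul_assoc _ _ _
    _ ≤ sphereArea N * (A / I ^ (2 / (p + 1))) := by
        gcongr
        exact le_div_rpow_of_le_mul_rpow (by positivity) hA hI_pos hq hα hI_le
    _ = sphereArea N * A / I ^ (2 / (p + 1)) := mul_div_assoc' _ _ _
    _ ≤ ray α p u := by
        unfold ray
        gcongr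
        exact hrad.sphereArea_mul_integral_deriv_profile_sq_le hu.1

end LowerBound

section Trial

/-- The radial trial function `|x|^α (1 - |x|)`, concentrated in the shell `1 - |x| ≲ 1/α` where the
weight `|x|^α` is not small; its Rayleigh quotient has the order of the radial level. It is written
as a difference of powers of the norm, each of which is `C¹`. -/
def shellTrial {V : Type*} [Norm V] (α : ℝ) (x : V) : ℝ := ‖x‖ ^ α - ‖x‖ ^ (α + 1)

lemma norm_gradient_shellTrial {V : Type*} [NormedAddCommGroup V] [InnerProductSpace ℝ V]
    [CompleteSpace V] {α : ℝ} (hα : 1 < α) (x : V) :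
    ‖gradient (shellTrial α) x‖ = |α * ‖x‖ ^ (α - 1) - (α + 1) * ‖x‖ ^ α| := by
  have hderiv : HasFDerivAt (shellTrial α)
      ((α * ‖x‖ ^ (α - 2) - (α + 1) * ‖x‖ ^ (α + 1 - 2)) • innerSL ℝ x) x := by
    rw [sub_smul]
    exact (hasFDerivAt_norm_rpow x hα).sub (hasFDerivAt_norm_rpow x (by linarith))
  rw [norm_gradient, hderiv.fderiv, norm_smul, innerSL_apply_norm, Real.norm_eq_abs]
  rcases eq_or_ne x 0 with rfl | hx
  · simp [Real.zero_rpow (sub_ne_zero.2 hα.ne'), Real.zero_rpow (zero_lt_one.trans hα).ne']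
  · have hx0 : ‖x‖ ≠ 0 := norm_ne_zero_iff.2 hx
    rw [← abs_norm x, ← abs_mul, abs_norm, sub_mul, mul_assoc, mul_assoc,
      ← Real.rpow_add_one hx0, ← Real.rpow_add_one hx0]
    ring_nf

lemma integral_sq_deriv_shellTrial {α : ℝ} (hα : 1 ≤ α) :
    ∫ r in (0 : ℝ)..1, (α * r ^ (α - 1) - (α + 1) * r ^ α) ^ 2 = α / (4 * α ^ 2 - 1) := by
  have hexpand : EqOn (fun r : ℝ => (α * r ^ (α - 1) - (α + 1) * r ^ α) ^ 2)
      (fun r => α ^ 2 * r ^ (2 * α - 2) - 2 * α * (α + 1) * r ^ (2 * α - 1) +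
        (α + 1) ^ 2 * r ^ (2 * α)) (uIcc 0 1) := by
    intro r hr
    have hr0 : 0 ≤ r := by simpa using hr.1
    have h₁ : r ^ (2 * α - 2) = r ^ (α - 1) * r ^ (α - 1) := by
      rw [← Real.rpow_add_of_nonneg hr0 (by linarith) (by linarith)]; ring_nf
    have h₂ : r ^ (2 * α - 1) = r ^ (α - 1) * r ^ α := by
      rw [← Real.rpow_add_of_nonneg hr0 (by linarith) (by linarith)]; ring_nf
    have h₃ : r ^ (2 * α) = r ^ α * r ^ α := by
      rw [← Real.rpow_add_of_nonneg hr0 (by linarith) (by linarith)]; ring_nf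
    simp only [h₁, h₂, h₃]
    ring
  have hint {s : ℝ} (hs : -1 < s) (c : ℝ) :
      IntervalIntegrable (fun r : ℝ => c * r ^ s) volume 0 1 :=
    (intervalIntegral.intervalIntegrable_rpow' hs).const_mul c
  have hmonomial {s : ℝ} (hs : -1 < s) : ∫ r in (0 : ℝ)..1, r ^ s = 1 / (s + 1) := by
    rw [integral_rpow (Or.inl hs), Real.one_rpow, Real.zero_rpow (by linarith), sub_zero]
  have h₁ : -1 < 2 * α - 2 := by linarith
  have h₂ : -1 < 2 * α - 1 := by linarith
  have h₃ : -1 < 2 * α := by linarith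
  rw [intervalIntegral.integral_congr hexpand,
    intervalIntegral.integral_add ((hint h₁ _).sub (hint h₂ _)) (hint h₃ _),
    intervalIntegral.integral_sub (hint h₁ _) (hint h₂ _)]
  simp only [intervalIntegral.integral_const_mul, hmonomial h₁, hmonomial h₂, hmonomial h₃]
  have h₄ : α * 2 - 1 ≠ 0 := by linarith
  have h₅ : α * 2 + 1 ≠ 0 := by linarith
  rw [show 2 * α - 2 + 1 = 2 * α - 1 by ring, show 2 * α - 1 + 1 = 2 * α by ring,
    show 4 * α ^ 2 - 1 = (2 * α - 1) * (2 * α + 1) by ring]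
  field_simp
  ring

lemma radial_shellTrial {N : ℕ} (α : ℝ) : radial (shellTrial α : E N → ℝ) :=
  fun x y h => by simp only [shellTrial, h]

variable {N : ℕ} [NeZero N]

lemma memC_shellTrial {α : ℝ} (hα : 1 < α) : memC (shellTrial α : E N → ℝ) := by
  have hnorm : ‖(1 / 2 : ℝ) • (EuclideanSpace.single 0 1 : E N)‖ = 1 / 2 := by simp [norm_smul]
  refine ⟨?_, fun x hx => by simp [shellTrial, hx], (1 / 2 : ℝ) • EuclideanSpace.single 0 1, ?_, ?_⟩
  · exact ((contDiff_norm_rpow hα).sub (contDiff_norm_rpow (by linarith))).contDiffOn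
  · rw [mem_closedBall_zero_iff, hnorm]
    norm_num
  · have hpow : (0 : ℝ) < (1 / 2) ^ α := by positivity
    rw [shellTrial, hnorm, Real.rpow_add_one (by norm_num)]
    linarith

lemma setIntegral_norm_gradient_shellTrial_sq_le {α : ℝ} (hα : 1 < α) :
    ∫ x in ball (0 : E N) 1, ‖gradient (shellTrial α) x‖ ^ 2 ≤ sphereArea N * α⁻¹ := by
  have hcont : Continuous fun r : ℝ => (α * r ^ (α - 1) - (α + 1) * r ^ α) ^ 2 := by
    have h₁ := Real.continuous_rpow_const (q := α - 1) (by linarith)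
    have h₂ := Real.continuous_rpow_const (q := α) (by linarith)
    fun_prop
  simp_rw [norm_gradient_shellTrial hα, sq_abs]
  rw [setIntegral_unitBall_fun_norm fun r => (α * r ^ (α - 1) - (α + 1) * r ^ α) ^ 2]
  refine mul_le_mul_of_nonneg_left ?_ sphereArea_pos.le
  calc ∫ r in (0 : ℝ)..1, r ^ (N - 1) * (α * r ^ (α - 1) - (α + 1) * r ^ α) ^ 2
      ≤ ∫ r in (0 : ℝ)..1, (α * r ^ (α - 1) - (α + 1) * r ^ α) ^ 2 :=
        intervalIntegral.integral_mono_on zero_le_one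
          (((continuous_pow _).mul hcont).intervalIntegrable _ _) (hcont.intervalIntegrable _ _)
          fun r hr => mul_le_of_le_one_left (sq_nonneg _) (pow_le_one₀ hr.1 hr.2)
    _ = α / (4 * α ^ 2 - 1) := integral_sq_deriv_shellTrial hα.le
    _ ≤ α⁻¹ := by
        rw [inv_eq_one_div, div_le_div_iff₀ (by nlinarith) (by linarith)]
        nlinarith

lemma setIntegral_norm_rpow_mul_abs_shellTrial_rpow (α q : ℝ) :
    ∫ x in ball (0 : E N) 1, ‖x‖ ^ α * |shellTrial α x| ^ q =
      sphereArea N * ∫ r in (0 : ℝ)..1, (1 - r) ^ q * r ^ (((N - 1 : ℕ) : ℝ) + α + α * q) := by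
  simp only [shellTrial]
  rw [setIntegral_unitBall_fun_norm fun r => r ^ α * |r ^ α - r ^ (α + 1)| ^ q]
  congr 1
  refine intervalIntegral.integral_congr_Ioo_of_le zero_le_one fun r ⟨hr0, hr1⟩ => ?_
  have hfactor : |r ^ α - r ^ (α + 1)| = r ^ α * (1 - r) := by
    rw [Real.rpow_add_one hr0.ne', ← mul_one_sub,
      abs_of_nonneg (mul_nonneg (by positivity) (sub_nonneg.2 hr1.le))]
  simp only [hfactor]
  rw [Real.mul_rpow (by positivity) (sub_nonneg.2 hr1.le), ← Real.rpow_mul hr0.le,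
    Real.rpow_add hr0, Real.rpow_add hr0, Real.rpow_natCast]
  ring

lemma exists_mul_rpow_le_setIntegral_shellTrial {q : ℝ} (hq : 0 < q) :
    ∃ c > 0, ∀ α ≥ 1, c * α ^ (-(q + 1)) ≤
      ∫ x in ball (0 : E N) 1, ‖x‖ ^ α * |shellTrial α x| ^ q := by
  have hω := sphereArea_pos (N := N)
  set K : ℝ := ((N - 1 : ℕ) : ℝ) + 1 + q with hK
  have : 0 < K := by positivity
  refine ⟨sphereArea N * ((2 * K) ^ (-(q + 1)) / (2 * (q + 1))), by positivity, fun α hα => ?_⟩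
  have hα0 : 0 < α := by linarith
  have hn : (0 : ℝ) ≤ ((N - 1 : ℕ) : ℝ) := by positivity
  have hγ1 : 1 ≤ ((N - 1 : ℕ) : ℝ) + α + α * q := by nlinarith [hn]
  have hγK : ((N - 1 : ℕ) : ℝ) + α + α * q ≤ K * α := by
    rw [hK]
    nlinarith [hn]
  rw [setIntegral_norm_rpow_mul_abs_shellTrial_rpow, mul_assoc]
  refine mul_le_mul_of_nonneg_left ?_ hω.le
  calc (2 * K) ^ (-(q + 1)) / (2 * (q + 1)) * α ^ (-(q + 1))
      = (2 * (K * α)) ^ (-(q + 1)) / (2 * (q + 1)) := by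
        rw [div_mul_eq_mul_div, ← Real.mul_rpow (by positivity) hα0.le, mul_assoc]
    _ ≤ (2 * (((N - 1 : ℕ) : ℝ) + α + α * q)) ^ (-(q + 1)) / (2 * (q + 1)) := by
        gcongr ?_ / _
        exact Real.rpow_le_rpow_of_nonpos (by positivity) (by gcongr) (by linarith)
    _ ≤ ∫ r in (0 : ℝ)..1, (1 - r) ^ q * r ^ (((N - 1 : ℕ) : ℝ) + α + α * q) :=
        le_integral_one_sub_rpow_mul_rpow (by linarith) hγ1

lemma exists_ray_shellTrial_le_mul_rpow {p : ℝ} (hp : -1 < p) :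
    ∃ C, ∀ α > 1, ray α p (shellTrial α : E N → ℝ) ≤ C * α ^ (1 + 2 / (p + 1)) := by
  have hq : 0 < p + 1 := by linarith
  obtain ⟨c, hc, hI⟩ := exists_mul_rpow_le_setIntegral_shellTrial (N := N) hq
  refine ⟨sphereArea N * c ^ (-(2 / (p + 1))), fun α hα => ?_⟩
  have hα0 : 0 < α := by linarith
  have hω := sphereArea_pos (N := N)
  calc ray α p (shellTrial α : E N → ℝ)
      ≤ sphereArea N * α⁻¹ / (c * α ^ (-(p + 1 + 1))) ^ (2 / (p + 1)) := by
        unfold ray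
        gcongr
        · exact setIntegral_norm_gradient_shellTrial_sq_le hα
        · exact hI α hα.le
    _ = sphereArea N * α⁻¹ / (c ^ (2 / (p + 1)) * α ^ (-(2 + 2 / (p + 1)))) := by
        rw [Real.mul_rpow hc.le (by positivity), ← Real.rpow_mul hα0.le]
        congr 3
        field_simp
    _ = sphereArea N * c ^ (-(2 / (p + 1))) * α ^ (1 + 2 / (p + 1)) := by
        have hexp : α ^ (2 + 2 / (p + 1)) = α * α ^ (1 + 2 / (p + 1)) := by
          rw [← Real.rpow_one_add' hα0.le (by positivity)]
          ring_nf
        rw [Real.rpow_neg hα0.le, Real.rpow_neg hc.le, hexp]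
        field_simp

end Trial

theorem stmt5_general {N : ℕ} [NeZero N] {p : ℝ} (hp : -1 < p) :
    ∃ c₁ c₂ α₀ : ℝ, 0 < c₁ ∧ c₁ ≤ c₂ ∧ 0 < α₀ ∧
      ∀ α : ℝ, α₀ ≤ α →
        c₁ * α ^ (1 + 2 / (p + 1)) ≤ SradVal N α p ∧
        SradVal N α p ≤ c₂ * α ^ (1 + 2 / (p + 1)) ∧
        ∀ u : E N → ℝ, memC u → radial u → c₁ * α ^ (1 + 2 / (p + 1)) ≤ ray α p u := by
  obtain ⟨c₁, hc₁, hlower⟩ := exists_forall_radial_mul_rpow_le_ray (N := N) hp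
  obtain ⟨c₂, hupper⟩ := exists_ray_shellTrial_le_mul_rpow (N := N) hp
  refine ⟨c₁, max c₁ c₂, max 2 (((N - 1 : ℕ) : ℝ) * (p + 1)), hc₁, le_max_left _ _,
    by positivity, fun α hα => ?_⟩
  obtain ⟨hα2, hnα⟩ := max_le_iff.1 hα
  have hα0 : 0 < α := by linarith
  have hα1 : 1 < α := by linarith
  have htrial : ray α p (shellTrial α : E N → ℝ) ∈
      {c | ∃ u : E N → ℝ, memC u ∧ radial u ∧ ray α p u = c} :=
    ⟨shellTrial α, memC_shellTrial hα1, radial_shellTrial α, rfl⟩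
  have hbound : c₁ * α ^ (1 + 2 / (p + 1)) ∈
      lowerBounds {c | ∃ u : E N → ℝ, memC u ∧ radial u ∧ ray α p u = c} := by
    rintro _ ⟨u, hu, hrad, rfl⟩
    exact hlower α hα0 hnα u hu hrad
  refine ⟨le_csInf ⟨_, htrial⟩ hbound, ?_, hlower α hα0 hnα⟩
  calc SradVal N α p ≤ ray α p (shellTrial α : E N → ℝ) := csInf_le ⟨_, hbound⟩ htrial
    _ ≤ c₂ * α ^ (1 + 2 / (p + 1)) := hupper α hα1
    _ ≤ max c₁ c₂ * α ^ (1 + 2 / (p + 1)) := by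
        gcongr
        exact le_max_right _ _

/-- Asymptotics of the radial ground-state level: S^rad_{α,p} ~ α^{1+2/(p+1)} as α → ∞. -/
theorem stmt5 {N : ℕ} (hN : 2 ≤ N) (p : ℝ) (hp : 1 < p)
    (hsub : 3 ≤ N → p + 1 < 2 * (N : ℝ) / ((N : ℝ) - 2)) :
    ∃ c₁ c₂ α₀ : ℝ, 0 < c₁ ∧ c₁ ≤ c₂ ∧ 0 < α₀ ∧
      ∀ α : ℝ, α₀ ≤ α →
        c₁ * α ^ (1 + 2 / (p + 1)) ≤ SradVal N α p ∧
        SradVal N α p ≤ c₂ * α ^ (1 + 2 / (p + 1)) ∧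
        ∀ u : E N → ℝ, memC u → radial u → c₁ * α ^ (1 + 2 / (p + 1)) ≤ ray α p u := by
  have : NeZero N := ⟨by omega⟩
  exact stmt5_general (by linarith)
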